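/- Let x > 0 and X* ∈ L⁰₊. Then X* solves the risk minimization problem (i.e., X* ∈ 𝒳(x) and h(X*) = γ₁(x)) if and only if there exists λ* > 0 such that (i) X* minimizes h(X) + λ*·E[ρX] over all X ∈ L⁰₊ and (ii) E[ρX*] = x. Moreover, in that case −λ* is a subgradient of γ₁ at x: γ₁(y) ≥ γ₁(x) − λ*·(y − x) for all y > 0. -/

import Mathlib

/-!
The weighted entropic risk measure `h` is convex (Hölder, `werm_convex`) and cash additive
(`werm_add_const`), while the budget `E[ρX]` is additive; the risk minimization problem is
therefore a convex program whose value `γ₁` is strictly decreasing in the capital `x`.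

If `X` solves the problem, cash additivity forces `E[ρX] = x`. The multiplier is the supremum
of the slopes `(h(X) - h(Z)) / (E[ρZ] - x)` over payoffs `Z` with `E[ρZ] > x`. Mixing such a `Z`
with a payoff `Y` of budget below `x` yields a feasible payoff, so by convexity every such slope is
at most `(h(Y) - h(X)) / (x - E[ρY])` (`slope_le_slope`). Hence the supremum is finite and the
line of slope `-λ` through `(x, h(X))` lies below all points `(E[ρY], h(Y))`; it is positive
because `Z = X + 1` has slope `1 / E[ρ]`. This direction also uses that `h` is bounded below
on the feasible set (`werm_bddBelow`), so that the infimum `γ₁(x)`, a real `sInf`, is a true lower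
bound.

Conversely, minimality of `h + λ E[ρ ·]` at `X` says `h(X) - λ (y - x) ≤ h(Y)` for every `Y`
with `E[ρY] ≤ y` (`lagrangian_le`), which gives both optimality (`y = x`) and the subgradient
inequality.
-/

open MeasureTheory Filter Set
open scoped ENNReal

noncomputable section

variable {Ω : Type*} [MeasurableSpace Ω]

/-- Entropic risk measure `h_a(X) = (1/a) log E[e^{-aX}]`. -/
def entropic (P : Measure Ω) (a : ℝ) (X : Ω → ℝ) : ℝ :=
  (1 / a) * Real.log (∫ ω, Real.exp (-a * X ω) ∂P)

/-- Weighted entropic risk measure `h(X) = ∫_{[a₀,a₁]} h_a(X) m(da)`. -/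
def werm (P : Measure Ω) (m : Measure ℝ) (a₀ a₁ : ℝ) (X : Ω → ℝ) : ℝ :=
  ∫ a in Set.Icc a₀ a₁, entropic P a X ∂m

/-- Marginal risk density transform `h′(X) = -∫_{[a₀,a₁]} e^{-aX}/E[e^{-aX}] m(da)`. -/
def hprime (P : Measure Ω) (m : Measure ℝ) (a₀ a₁ : ℝ) (X : Ω → ℝ) (ω : Ω) : ℝ :=
  -∫ a in Set.Icc a₀ a₁, Real.exp (-a * X ω) / (∫ ω', Real.exp (-a * X ω') ∂P) ∂m

/-- Extended-real-valued expectation `E[f] = ∫ f⁺ - ∫ f⁻ ∈ [-∞,∞]`. -/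
def eint (P : Measure Ω) (f : Ω → ℝ) : EReal :=
  ((∫⁻ ω, ENNReal.ofReal (f ω) ∂P : ℝ≥0∞) : EReal)
    - ((∫⁻ ω, ENNReal.ofReal (-(f ω)) ∂P : ℝ≥0∞) : EReal)

/-- `E[ρX] ∈ [0,∞]` for a nonnegative payoff. -/
def budget (P : Measure Ω) (ρ X : Ω → ℝ) : ℝ≥0∞ := ∫⁻ ω, ENNReal.ofReal (ρ ω * X ω) ∂P

/-- `X ∈ L⁰₊`: a nonnegative random variable. -/
def Lpos (P : Measure Ω) (X : Ω → ℝ) : Prop := Measurable X ∧ ∀ᵐ ω ∂P, 0 ≤ X ω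

/-- Objective of the Lagrangian risk-minimization problem: `h(X) + λ E[ρX]`. -/
def robj (P : Measure Ω) (m : Measure ℝ) (a₀ a₁ : ℝ) (ρ : Ω → ℝ) (lam : ℝ) (X : Ω → ℝ) : EReal :=
  ((werm P m a₀ a₁ X : ℝ) : EReal) + (lam : EReal) * ((budget P ρ X : ℝ≥0∞) : EReal)

/-- `ψ_X(y) = ∫_{[a₀,a₁]} e^{-ay} / E[e^{-aX}] m(da)`. -/
def psi (P : Measure Ω) (m : Measure ℝ) (a₀ a₁ : ℝ) (X : Ω → ℝ) (y : ℝ) : ℝ :=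
  ∫ a in Set.Icc a₀ a₁, Real.exp (-a * y) / (∫ ω, Real.exp (-a * X ω) ∂P) ∂m

/-- Inverse of `ψ_X` on `(0,∞)` (realized via `sSup`, since `ψ_X` is continuous, strictly
decreasing with limits `∞` at `-∞` and `0` at `∞`). -/
def psiInv (P : Measure Ω) (m : Measure ℝ) (a₀ a₁ : ℝ) (X : Ω → ℝ) (z : ℝ) : ℝ :=
  sSup {y : ℝ | z ≤ psi P m a₀ a₁ X y}

/-- The transform `𝐓X = max(ψ_X⁻¹(λρ), 0)`. -/
def Ttrans (P : Measure Ω) (m : Measure ℝ) (a₀ a₁ lam : ℝ) (ρ : Ω → ℝ) (X : Ω → ℝ) : Ω → ℝ :=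
  fun ω => max (psiInv P m a₀ a₁ X (lam * ρ ω)) 0

/-- `X ∈ 𝒳(x)`: nonnegative and `E[ρX] ≤ x`. -/
def feasible (P : Measure Ω) (ρ : Ω → ℝ) (x : ℝ) (X : Ω → ℝ) : Prop :=
  Lpos P X ∧ budget P ρ X ≤ ENNReal.ofReal x

/-- `γ₁(x)`: the minimal value of `h` over `𝒳(x)`. -/
def gamma1 (P : Measure Ω) (m : Measure ℝ) (a₀ a₁ : ℝ) (ρ : Ω → ℝ) (x : ℝ) : ℝ :=
  sInf (werm P m a₀ a₁ '' {X | feasible P ρ x X})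

/-- Expected utility `E[U(X)] ∈ [-∞,∞]`. -/
def eutil (P : Measure Ω) (U : ℝ → ℝ) (X : Ω → ℝ) : EReal := eint P (fun ω => U (X ω))

/-- Full Lagrangian objective `E[U(X)] - μ h(X) - λ E[ρX]`. -/
def fullObj (P : Measure Ω) (m : Measure ℝ) (a₀ a₁ : ℝ) (ρ : Ω → ℝ) (U : ℝ → ℝ)
    (μ lam : ℝ) (X : Ω → ℝ) : EReal :=
  eutil P U X - ((μ * werm P m a₀ a₁ X : ℝ) : EReal)
    - (lam : EReal) * ((budget P ρ X : ℝ≥0∞) : EReal)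

/-! ### Properties of the weighted entropic risk measure -/

lemma integrable_exp_neg_mul {P : Measure Ω} [IsProbabilityMeasure P] {X : Ω → ℝ}
    (hX : Lpos P X) {a : ℝ} (ha : 0 ≤ a) :
    Integrable (fun ω => Real.exp (-a * X ω)) P := by
  have := hX.1
  refine Integrable.mono' (integrable_const (1 : ℝ)) (by fun_prop) ?_
  filter_upwards [hX.2] with ω hω
  rw [Real.norm_eq_abs, Real.abs_exp, Real.exp_le_one_iff]
  nlinarith [mul_nonneg ha hω]

lemma integral_exp_neg_mul_anti {P : Measure Ω} [IsProbabilityMeasure P] {X : Ω → ℝ}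
    (hX : Lpos P X) {a b : ℝ} (ha : 0 ≤ a) (hab : a ≤ b) :
    ∫ ω, Real.exp (-b * X ω) ∂P ≤ ∫ ω, Real.exp (-a * X ω) ∂P := by
  refine integral_mono_ae (integrable_exp_neg_mul hX (ha.trans hab))
    (integrable_exp_neg_mul hX ha) ?_
  filter_upwards [hX.2] with ω hω
  exact Real.exp_le_exp.mpr (by nlinarith)

/-- `a ↦ E[e^{-aX}]` is antitone and positive, so `h_a(X)` is measurable and bounded on
`[a₀, a₁]`; the integral defining `h(X)` is therefore a genuine one. -/
lemma integrableOn_entropic {P : Measure Ω} [IsProbabilityMeasure P] {m : Measure ℝ}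
    [IsProbabilityMeasure m] {a₀ a₁ : ℝ} (ha₀ : 0 < a₀) {X : Ω → ℝ} (hX : Lpos P X) :
    IntegrableOn (fun a => entropic P a X) (Set.Icc a₀ a₁) m := by
  have hmeas : AEMeasurable (fun a => ∫ ω, Real.exp (-a * X ω) ∂P)
      (m.restrict (Set.Icc a₀ a₁)) := by
    refine aemeasurable_restrict_of_antitoneOn measurableSet_Icc ?_
    intro a ha b _ hab
    exact integral_exp_neg_mul_anti hX (ha₀.le.trans ha.1) hab
  have hmeas2 : AEMeasurable (fun a => entropic P a X) (m.restrict (Set.Icc a₀ a₁)) :=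
    (measurable_const.div measurable_id).aemeasurable.mul
      (Real.measurable_log.comp_aemeasurable hmeas)
  refine Integrable.mono'
    (integrable_const ((1 / a₀) * (-Real.log (∫ ω, Real.exp (-a₁ * X ω) ∂P))))
    hmeas2.aestronglyMeasurable ?_
  filter_upwards [ae_restrict_mem measurableSet_Icc] with a ha
  have ha0 : 0 < a := ha₀.trans_le ha.1
  have hp1 := integral_exp_pos (integrable_exp_neg_mul hX (ha0.le.trans ha.2))
  have hpa := integral_exp_pos (integrable_exp_neg_mul hX ha0.le)
  have hle := integral_exp_neg_mul_anti hX ha0.le ha.2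
  have hle1 : ∫ ω, Real.exp (-a * X ω) ∂P ≤ 1 := by
    have := integral_exp_neg_mul_anti hX le_rfl ha0.le
    simpa using this
  have hlog : Real.log (∫ ω, Real.exp (-a * X ω) ∂P) ≤ 0 :=
    Real.log_nonpos hpa.le hle1
  have hlog' := Real.log_le_log hp1 hle
  unfold entropic
  rw [Real.norm_eq_abs, abs_mul, abs_of_nonneg (by positivity : 0 ≤ 1 / a),
    abs_of_nonpos hlog]
  exact mul_le_mul (one_div_le_one_div_of_le ha₀ ha.1) (by linarith) (by linarith)
    (by positivity)

/-- Hölder's inequality in logarithmic form, obtained by integrating the convexity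
inequality of `exp` after normalizing `e^{-aX}` and `e^{-aY}` to have integral one. -/
lemma entropic_convex {P : Measure Ω} [IsProbabilityMeasure P] {X Y : Ω → ℝ}
    (hX : Lpos P X) (hY : Lpos P Y) {a : ℝ} (ha : 0 < a) {t s : ℝ} (ht : 0 ≤ t) (hs : 0 ≤ s)
    (hts : t + s = 1) (hZ : Lpos P (fun ω => t * X ω + s * Y ω)) :
    entropic P a (fun ω => t * X ω + s * Y ω) ≤ t * entropic P a X + s * entropic P a Y := by
  have iX := integrable_exp_neg_mul hX ha.le
  have iY := integrable_exp_neg_mul hY ha.le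
  have iZ := integrable_exp_neg_mul hZ ha.le
  have pX := integral_exp_pos iX
  have pY := integral_exp_pos iY
  have pZ := integral_exp_pos iZ
  set A := Real.log (∫ ω, Real.exp (-a * X ω) ∂P) with hA
  set B := Real.log (∫ ω, Real.exp (-a * Y ω) ∂P) with hB
  have hle : ∫ ω, Real.exp (-a * (t * X ω + s * Y ω)) ∂P ≤ Real.exp (t * A + s * B) := by
    calc ∫ ω, Real.exp (-a * (t * X ω + s * Y ω)) ∂P
        ≤ ∫ ω, Real.exp (t * A + s * B) * (t * (Real.exp (-a * X ω) * Real.exp (-A))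
            + s * (Real.exp (-a * Y ω) * Real.exp (-B))) ∂P := by
          refine integral_mono iZ ((((iX.mul_const _).const_mul t).add
            ((iY.mul_const _).const_mul s)).const_mul _) fun ω => ?_
          have h := convexOn_exp.2 (Set.mem_univ (-a * X ω + -A))
            (Set.mem_univ (-a * Y ω + -B)) ht hs hts
          simp only [smul_eq_mul, Real.exp_add (-a * X ω), Real.exp_add (-a * Y ω)] at h
          calc Real.exp (-a * (t * X ω + s * Y ω))
              = Real.exp (t * A + s * B)
                * Real.exp (t * (-a * X ω + -A) + s * (-a * Y ω + -B)) := by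
                rw [← Real.exp_add]; congr 1; ring
            _ ≤ _ := mul_le_mul_of_nonneg_left h (Real.exp_pos _).le
      _ = Real.exp (t * A + s * B) := by
          rw [integral_const_mul, integral_add ((iX.mul_const _).const_mul t)
            ((iY.mul_const _).const_mul s), integral_const_mul, integral_const_mul,
            integral_mul_const, integral_mul_const, Real.exp_neg, Real.exp_neg, hA, hB,
            Real.exp_log pX, Real.exp_log pY, mul_inv_cancel₀ pX.ne', mul_inv_cancel₀ pY.ne']
          rw [mul_one, mul_one, hts, mul_one]
  have hlog : Real.log (∫ ω, Real.exp (-a * (t * X ω + s * Y ω)) ∂P) ≤ t * A + s * B := by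
    rw [← Real.log_exp (t * A + s * B)]
    exact Real.log_le_log pZ hle
  calc entropic P a (fun ω => t * X ω + s * Y ω) ≤ (1 / a) * (t * A + s * B) :=
        mul_le_mul_of_nonneg_left hlog (by positivity)
    _ = t * entropic P a X + s * entropic P a Y := by
        simp only [entropic, ← hA, ← hB]; ring

lemma Lpos.combo {P : Measure Ω} {X Y : Ω → ℝ} (hX : Lpos P X) (hY : Lpos P Y) {t s : ℝ}
    (ht : 0 ≤ t) (hs : 0 ≤ s) : Lpos P (fun ω => t * X ω + s * Y ω) := by
  refine ⟨(hX.1.const_mul t).add (hY.1.const_mul s), ?_⟩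
  filter_upwards [hX.2, hY.2] with ω h1 h2
  positivity

lemma Lpos.add_const {P : Measure Ω} {X : Ω → ℝ} (hX : Lpos P X) {c : ℝ} (hc : 0 ≤ c) :
    Lpos P (fun ω => X ω + c) := by
  refine ⟨hX.1.add_const c, ?_⟩
  filter_upwards [hX.2] with ω h1
  positivity

lemma werm_convex {P : Measure Ω} [IsProbabilityMeasure P] {m : Measure ℝ}
    [IsProbabilityMeasure m] {a₀ a₁ : ℝ} (ha₀ : 0 < a₀) {X Y : Ω → ℝ}
    (hX : Lpos P X) (hY : Lpos P Y) {t s : ℝ} (ht : 0 ≤ t) (hs : 0 ≤ s) (hts : t + s = 1) :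
    werm P m a₀ a₁ (fun ω => t * X ω + s * Y ω)
      ≤ t * werm P m a₀ a₁ X + s * werm P m a₀ a₁ Y := by
  have iX := integrableOn_entropic (m := m) (a₁ := a₁) ha₀ hX
  have iY := integrableOn_entropic (m := m) (a₁ := a₁) ha₀ hY
  have hZ := hX.combo hY ht hs
  unfold werm
  rw [← integral_const_mul, ← integral_const_mul,
    ← integral_add (Integrable.const_mul iX t) (Integrable.const_mul iY s)]
  refine setIntegral_mono_on (integrableOn_entropic ha₀ hZ)
    ((Integrable.const_mul iX t).add (Integrable.const_mul iY s)) measurableSet_Icc ?_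
  intro a ha
  exact entropic_convex hX hY (ha₀.trans_le ha.1) ht hs hts hZ

/-- Cash additivity: a sure gain `c` lowers the risk by `c`. -/
lemma werm_add_const {P : Measure Ω} [IsProbabilityMeasure P] {m : Measure ℝ}
    [IsProbabilityMeasure m] {a₀ a₁ : ℝ} (ha₀ : 0 < a₀) (hm : m (Set.Icc a₀ a₁) = 1)
    {X : Ω → ℝ} (hX : Lpos P X) (c : ℝ) :
    werm P m a₀ a₁ (fun ω => X ω + c) = werm P m a₀ a₁ X - c := by
  have iX := integrableOn_entropic (m := m) (a₁ := a₁) ha₀ hX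
  have hc : ∫ _ in Set.Icc a₀ a₁, c ∂m = c := by
    rw [setIntegral_const, measureReal_def, hm]; simp
  unfold werm
  conv_rhs => rw [← hc]
  rw [← integral_sub iX (integrable_const c)]
  refine setIntegral_congr_fun measurableSet_Icc fun a ha => ?_
  have ha0 : 0 < a := ha₀.trans_le ha.1
  have p := integral_exp_pos (integrable_exp_neg_mul hX ha0.le)
  simp only [entropic, mul_add, Real.exp_add]
  rw [integral_mul_const, Real.log_mul p.ne' (Real.exp_pos _).ne', Real.log_exp]
  field_simp
  ring

/-! ### The budget functional -/

lemma budget_combo_le {P : Measure Ω} {ρ : Ω → ℝ} (hmρ : Measurable ρ) {X Y : Ω → ℝ}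
    (hX : Lpos P X) {t s : ℝ} (ht : 0 ≤ t) (hs : 0 ≤ s) :
    budget P ρ (fun ω => t * X ω + s * Y ω)
      ≤ ENNReal.ofReal t * budget P ρ X + ENNReal.ofReal s * budget P ρ Y := by
  have := hX.1
  unfold budget
  rw [← lintegral_const_mul' _ _ ENNReal.ofReal_ne_top,
    ← lintegral_const_mul' _ _ ENNReal.ofReal_ne_top, ← lintegral_add_left (by fun_prop)]
  refine lintegral_mono fun ω => ?_
  rw [← ENNReal.ofReal_mul ht, ← ENNReal.ofReal_mul hs]
  refine le_trans (le_of_eq ?_) ENNReal.ofReal_add_le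
  congr 1; ring

lemma budget_add_const {P : Measure Ω} {ρ : Ω → ℝ} (hmρ : Measurable ρ)
    (hρ0 : ∀ᵐ ω ∂P, 0 < ρ ω) (hρint : Integrable ρ P) {X : Ω → ℝ}
    (hX : Lpos P X) {c : ℝ} (hc : 0 ≤ c) :
    budget P ρ (fun ω => X ω + c) = budget P ρ X + ENNReal.ofReal (c * ∫ ω, ρ ω ∂P) := by
  have := hX.1
  unfold budget
  rw [← integral_const_mul, ofReal_integral_eq_lintegral_ofReal (hρint.const_mul c),
    ← lintegral_add_left (by fun_prop)]
  · refine lintegral_congr_ae ?_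
    filter_upwards [hρ0, hX.2] with ω h1 h2
    rw [← ENNReal.ofReal_add (by positivity) (by positivity)]
    congr 1; ring
  · filter_upwards [hρ0] with ω h1
    positivity

lemma integral_pos_of_ae_pos {P : Measure Ω} [IsProbabilityMeasure P] {f : Ω → ℝ}
    (hf : Integrable f P) (h0 : ∀ᵐ ω ∂P, 0 < f ω) : 0 < ∫ ω, f ω ∂P := by
  rw [integral_pos_iff_support_of_nonneg_ae (h0.mono fun _ h => h.le) hf]
  have h : (Function.support f : Set Ω) =ᵐ[P] Set.univ :=
    eventuallyEq_univ.mpr (h0.mono fun _ h => h.ne')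
  rw [measure_congr h, measure_univ]
  exact one_pos

/-- `h` is bounded below on the feasible set. With the weight `w = min ρ 1` and
`Z = E[w]`, Jensen's inequality for the tilted measure gives
`E[e^{-aX}] ≥ E[w e^{-aX}] ≥ Z exp(-a x / Z)`; here it is proved by integrating the tangent
line of `exp` at `-a x / Z`. -/
lemma werm_bddBelow {P : Measure Ω} [IsProbabilityMeasure P] {m : Measure ℝ}
    [IsProbabilityMeasure m] {a₀ a₁ : ℝ} (ha₀ : 0 < a₀) (hm : m (Set.Icc a₀ a₁) = 1)
    {ρ : Ω → ℝ} (hmρ : Measurable ρ) (hρ0 : ∀ᵐ ω ∂P, 0 < ρ ω) {x : ℝ} (hx : 0 < x) :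
    BddBelow (werm P m a₀ a₁ '' {X | feasible P ρ x X}) := by
  have iw : Integrable (fun ω => min (ρ ω) 1) P := by
    refine Integrable.mono' (integrable_const (1 : ℝ)) (by fun_prop) ?_
    filter_upwards [hρ0] with ω h
    rw [Real.norm_eq_abs, abs_of_nonneg (le_min h.le zero_le_one)]
    exact min_le_right _ _
  have hZ : 0 < ∫ ω, min (ρ ω) 1 ∂P :=
    integral_pos_of_ae_pos iw (hρ0.mono fun _ h => lt_min h one_pos)
  have hZ1 : ∫ ω, min (ρ ω) 1 ∂P ≤ 1 := by
    calc ∫ ω, min (ρ ω) 1 ∂P ≤ ∫ _, (1 : ℝ) ∂P :=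
          integral_mono iw (integrable_const 1) fun ω => min_le_right _ _
      _ = 1 := by simp
  set Z := ∫ ω, min (ρ ω) 1 ∂P with hZdef
  refine ⟨(1 / a₀) * Real.log Z - x / Z, ?_⟩
  rintro _ ⟨X, ⟨hX, hb⟩, rfl⟩
  have hXm := hX.1
  have hnn : 0 ≤ᵐ[P] fun ω => ρ ω * X ω := by
    filter_upwards [hρ0, hX.2] with ω h1 h2
    exact mul_nonneg h1.le h2
  have hmeas : AEStronglyMeasurable (fun ω => ρ ω * X ω) P := by fun_prop
  have iρX : Integrable (fun ω => ρ ω * X ω) P :=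
    ⟨hmeas, (hasFiniteIntegral_iff_ofReal hnn).mpr (hb.trans_lt ENNReal.ofReal_lt_top)⟩
  have hρX : ∫ ω, ρ ω * X ω ∂P ≤ x := by
    rw [integral_eq_lintegral_of_nonneg_ae hnn hmeas]
    exact ENNReal.toReal_le_of_le_ofReal hx.le hb
  have hc : ∫ _ in Set.Icc a₀ a₁, ((1 / a₀) * Real.log Z - x / Z) ∂m
      = (1 / a₀) * Real.log Z - x / Z := by
    rw [setIntegral_const, measureReal_def, hm]; simp
  rw [← hc]
  refine setIntegral_mono_on (integrable_const _) (integrableOn_entropic ha₀ hX)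
    measurableSet_Icc ?_
  intro a ha
  have ha0 : 0 < a := ha₀.trans_le ha.1
  have key : Z * Real.exp (-(a * x / Z)) ≤ ∫ ω, Real.exp (-a * X ω) ∂P := by
    calc Z * Real.exp (-(a * x / Z))
        ≤ Real.exp (-(a * x / Z)) * (Z * (1 + a * x / Z) - a * ∫ ω, ρ ω * X ω ∂P) := by
          rw [mul_comm]
          refine mul_le_mul_of_nonneg_left ?_ (Real.exp_pos _).le
          have : Z * (1 + a * x / Z) = Z + a * x := by field_simp
          rw [this]
          nlinarith
      _ = ∫ ω, Real.exp (-(a * x / Z))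
            * (min (ρ ω) 1 * (1 + a * x / Z) - a * (ρ ω * X ω)) ∂P := by
          rw [integral_const_mul, integral_sub (iw.mul_const _) (iρX.const_mul _),
            integral_mul_const, integral_const_mul]
      _ ≤ _ := by
          refine integral_mono_ae (((iw.mul_const _).sub (iρX.const_mul _)).const_mul _)
            (integrable_exp_neg_mul hX ha0.le) ?_
          filter_upwards [hρ0, hX.2] with ω h1 h2
          have hw0 : 0 ≤ min (ρ ω) 1 := le_min h1.le zero_le_one
          have hw1 : min (ρ ω) 1 ≤ 1 := min_le_right _ _
          have hwρ : min (ρ ω) 1 ≤ ρ ω := min_le_left _ _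
          have htan := Real.add_one_le_exp (-a * X ω + a * x / Z)
          have hE := Real.exp_pos (-(a * x / Z))
          have hsplit : Real.exp (-a * X ω)
              = Real.exp (-(a * x / Z)) * Real.exp (-a * X ω + a * x / Z) := by
            rw [← Real.exp_add]; congr 1; ring
          rw [hsplit]
          refine mul_le_mul_of_nonneg_left ?_ hE.le
          have h3 : min (ρ ω) 1 * (a * X ω) ≤ ρ ω * (a * X ω) :=
            mul_le_mul_of_nonneg_right hwρ (by positivity)
          have h4 := mul_le_mul_of_nonneg_left htan hw0
          have h5 := mul_le_mul_of_nonneg_right hw1 (Real.exp_pos (-a * X ω + a * x / Z)).le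
          linarith
  have hlog := Real.log_le_log (by positivity) key
  rw [Real.log_mul hZ.ne' (Real.exp_pos _).ne', Real.log_exp] at hlog
  have hlZ : Real.log Z ≤ 0 := Real.log_nonpos hZ.le hZ1
  have h6 : (1 / a₀) * Real.log Z ≤ (1 / a) * Real.log Z :=
    mul_le_mul_of_nonpos_right (one_div_le_one_div_of_le ha₀ ha.1) hlZ
  calc (1 / a₀) * Real.log Z - x / Z ≤ (1 / a) * Real.log Z - x / Z := by linarith
    _ = (1 / a) * (Real.log Z + -(a * x / Z)) := by field_simp; ring
    _ ≤ entropic P a X := mul_le_mul_of_nonneg_left hlog (by positivity)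

/-! ### Lagrangian duality -/

lemma robj_of_ne_top {P : Measure Ω} {m : Measure ℝ} {a₀ a₁ : ℝ} {ρ : Ω → ℝ} (lam : ℝ)
    {Y : Ω → ℝ} (hb : budget P ρ Y ≠ ⊤) :
    robj P m a₀ a₁ ρ lam Y
      = ((werm P m a₀ a₁ Y + lam * (budget P ρ Y).toReal : ℝ) : EReal) := by
  unfold robj
  rw [← EReal.coe_ennreal_toReal hb]
  norm_cast

lemma robj_of_eq_top {P : Measure Ω} {m : Measure ℝ} {a₀ a₁ : ℝ} {ρ : Ω → ℝ} {lam : ℝ}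
    (hlam : 0 < lam) {Y : Ω → ℝ} (hb : budget P ρ Y = ⊤) :
    robj P m a₀ a₁ ρ lam Y = ⊤ := by
  unfold robj
  rw [hb, EReal.coe_ennreal_top, EReal.coe_mul_top_of_pos hlam, EReal.coe_add_top]

/-- A Lagrangian minimizer with binding budget has the supporting-line property against
every payoff affordable with capital `y`. -/
lemma lagrangian_le {P : Measure Ω} {m : Measure ℝ} {a₀ a₁ : ℝ} {ρ : Ω → ℝ} {x lam : ℝ}
    (hx : 0 < x) (hlam : 0 < lam) {X : Ω → ℝ}
    (hmin : ∀ Y, Lpos P Y → robj P m a₀ a₁ ρ lam X ≤ robj P m a₀ a₁ ρ lam Y)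
    (hb : budget P ρ X = ENNReal.ofReal x) {y : ℝ} (hy : 0 < y) {Y : Ω → ℝ}
    (hY : feasible P ρ y Y) :
    werm P m a₀ a₁ X - lam * (y - x) ≤ werm P m a₀ a₁ Y := by
  have h := hmin Y hY.1
  rw [robj_of_ne_top lam (hb.trans_ne ENNReal.ofReal_ne_top),
    robj_of_ne_top lam (ne_top_of_le_ne_top ENNReal.ofReal_ne_top hY.2), hb,
    ENNReal.toReal_ofReal hx.le, EReal.coe_le_coe_iff] at h
  have h2 := ENNReal.toReal_le_of_le_ofReal hy.le hY.2
  nlinarith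

lemma gamma1_eq_of_lagrangian {P : Measure Ω} {m : Measure ℝ} {a₀ a₁ : ℝ} {ρ : Ω → ℝ}
    {x lam : ℝ} (hx : 0 < x) (hlam : 0 < lam) {X : Ω → ℝ} (hX : Lpos P X)
    (hmin : ∀ Y, Lpos P Y → robj P m a₀ a₁ ρ lam X ≤ robj P m a₀ a₁ ρ lam Y)
    (hb : budget P ρ X = ENNReal.ofReal x) :
    gamma1 P m a₀ a₁ ρ x = werm P m a₀ a₁ X := by
  refine IsLeast.csInf_eq ⟨⟨X, ⟨hX, hb.le⟩, rfl⟩, ?_⟩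
  rintro _ ⟨Y, hY, rfl⟩
  simpa using lagrangian_le hx hlam hmin hb hx hY

/-- By cash additivity, unspent capital could be invested in a sure gain, so the budget of a
minimizer binds. -/
lemma budget_eq_of_minimizer {P : Measure Ω} [IsProbabilityMeasure P] {m : Measure ℝ}
    [IsProbabilityMeasure m] {a₀ a₁ : ℝ} (ha₀ : 0 < a₀) (hm : m (Set.Icc a₀ a₁) = 1)
    {ρ : Ω → ℝ} (hmρ : Measurable ρ) (hρ0 : ∀ᵐ ω ∂P, 0 < ρ ω) (hρint : Integrable ρ P)
    {x : ℝ} {X : Ω → ℝ} (hX : feasible P ρ x X)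
    (hopt : ∀ Y, feasible P ρ x Y → werm P m a₀ a₁ X ≤ werm P m a₀ a₁ Y) :
    budget P ρ X = ENNReal.ofReal x := by
  have hR : 0 < ∫ ω, ρ ω ∂P := integral_pos_of_ae_pos hρint hρ0
  by_contra hne
  have hlt : budget P ρ X < ENNReal.ofReal x := lt_of_le_of_ne hX.2 hne
  have htop : budget P ρ X ≠ ⊤ := hlt.ne_top
  have hlt' : (budget P ρ X).toReal < x := (ENNReal.lt_ofReal_iff_toReal_lt htop).mp hlt
  have hc : 0 < (x - (budget P ρ X).toReal) / ∫ ω, ρ ω ∂P := div_pos (by linarith) hR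
  have h := hopt (fun ω => X ω + (x - (budget P ρ X).toReal) / ∫ ω, ρ ω ∂P)
    ⟨hX.1.add_const hc.le, by
      rw [budget_add_const hmρ hρ0 hρint hX.1 hc.le, div_mul_cancel₀ _ hR.ne']
      nth_rewrite 1 [← ENNReal.ofReal_toReal htop]
      rw [← ENNReal.ofReal_add ENNReal.toReal_nonneg (by linarith)]
      exact ENNReal.ofReal_le_ofReal (by linarith)⟩
  rw [werm_add_const ha₀ hm hX.1] at h
  linarith

/-- Comparison of slopes: mixing a cheap payoff `Y` and an expensive payoff `Z` so that the
mixture costs exactly `x`, convexity of `h` and optimality of `X` give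
`(h(X) - h(Z)) / (E[ρZ] - x) ≤ (h(Y) - h(X)) / (x - E[ρY])`. -/
lemma slope_le_slope {P : Measure Ω} [IsProbabilityMeasure P] {m : Measure ℝ}
    [IsProbabilityMeasure m] {a₀ a₁ : ℝ} (ha₀ : 0 < a₀)
    {ρ : Ω → ℝ} (hmρ : Measurable ρ) {x : ℝ} {X : Ω → ℝ}
    (hopt : ∀ Y, feasible P ρ x Y → werm P m a₀ a₁ X ≤ werm P m a₀ a₁ Y)
    {Y Z : Ω → ℝ} (hY : Lpos P Y) (hZ : Lpos P Z) (hYt : budget P ρ Y ≠ ⊤)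
    (hZt : budget P ρ Z ≠ ⊤) (hYx : (budget P ρ Y).toReal < x)
    (hZx : x < (budget P ρ Z).toReal) :
    (werm P m a₀ a₁ X - werm P m a₀ a₁ Z) / ((budget P ρ Z).toReal - x)
      ≤ (werm P m a₀ a₁ Y - werm P m a₀ a₁ X) / (x - (budget P ρ Y).toReal) := by
  set p := (budget P ρ Y).toReal with hp
  set q := (budget P ρ Z).toReal with hq
  have hqp : 0 < q - p := by linarith
  have ht : 0 ≤ (q - x) / (q - p) := div_nonneg (by linarith) hqp.le
  have hs : 0 ≤ (x - p) / (q - p) := div_nonneg (by linarith) hqp.le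
  have hts : (q - x) / (q - p) + (x - p) / (q - p) = 1 := by field_simp; ring
  have hbud : budget P ρ (fun ω => (q - x) / (q - p) * Y ω + (x - p) / (q - p) * Z ω)
      ≤ ENNReal.ofReal x := by
    refine (budget_combo_le hmρ hY ht hs).trans (le_of_eq ?_)
    rw [← ENNReal.ofReal_toReal hYt, ← ENNReal.ofReal_toReal hZt, ← hp, ← hq,
      ← ENNReal.ofReal_mul ht, ← ENNReal.ofReal_mul hs, ← ENNReal.ofReal_add
      (mul_nonneg ht ENNReal.toReal_nonneg) (mul_nonneg hs ENNReal.toReal_nonneg)]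
    congr 1
    field_simp
    ring
  have h := (hopt _ ⟨hY.combo hZ ht hs, hbud⟩).trans
    (werm_convex (m := m) (a₁ := a₁) ha₀ hY hZ ht hs hts)
  rw [div_mul_eq_mul_div, div_mul_eq_mul_div, ← add_div, le_div_iff₀ hqp] at h
  rw [div_le_div_iff₀ (by linarith) (by linarith)]
  linarith

/-- The multiplier is the supremum of the slopes `(h(X) - h(Z)) / (E[ρZ] - x)` over payoffs
`Z` more expensive than `x`. It is positive because `Z = X + 1` gives a positive slope. -/
lemma exists_multiplier {P : Measure Ω} [IsProbabilityMeasure P] {m : Measure ℝ}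
    [IsProbabilityMeasure m] {a₀ a₁ : ℝ} (ha₀ : 0 < a₀) (hm : m (Set.Icc a₀ a₁) = 1)
    {ρ : Ω → ℝ} (hmρ : Measurable ρ) (hρ0 : ∀ᵐ ω ∂P, 0 < ρ ω) (hρint : Integrable ρ P)
    {x : ℝ} (hx : 0 < x) {X : Ω → ℝ} (hX : Lpos P X)
    (hb : budget P ρ X = ENNReal.ofReal x)
    (hopt : ∀ Y, feasible P ρ x Y → werm P m a₀ a₁ X ≤ werm P m a₀ a₁ Y) :
    ∃ lam : ℝ, 0 < lam ∧
      ∀ Y, Lpos P Y → robj P m a₀ a₁ ρ lam X ≤ robj P m a₀ a₁ ρ lam Y := by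
  have hR : 0 < ∫ ω, ρ ω ∂P := integral_pos_of_ae_pos hρint hρ0
  set S : Set ℝ := {r | ∃ Z, Lpos P Z ∧ budget P ρ Z ≠ ⊤ ∧ x < (budget P ρ Z).toReal ∧
    r = (werm P m a₀ a₁ X - werm P m a₀ a₁ Z) / ((budget P ρ Z).toReal - x)} with hS
  have hup : ∀ Y, Lpos P Y → budget P ρ Y ≠ ⊤ → (budget P ρ Y).toReal < x →
      (werm P m a₀ a₁ Y - werm P m a₀ a₁ X) / (x - (budget P ρ Y).toReal)
        ∈ upperBounds S := by
    rintro Y hY hYt hYx _ ⟨Z, hZ, hZt, hZx, rfl⟩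
    exact slope_le_slope ha₀ hmρ hopt hY hZ hYt hZt hYx hZx
  have hbdd : BddAbove S := by
    have h0 : budget P ρ (fun _ => 0) = 0 := by simp [budget]
    exact ⟨_, hup (fun _ => 0) ⟨measurable_const, by simp⟩ (by simp [h0]) (by simpa [h0])⟩
  have hb1 : budget P ρ (fun ω => X ω + 1) = ENNReal.ofReal (x + ∫ ω, ρ ω ∂P) := by
    rw [budget_add_const hmρ hρ0 hρint hX zero_le_one, hb, one_mul,
      ← ENNReal.ofReal_add hx.le hR.le]
  have hmem : 1 / (∫ ω, ρ ω ∂P) ∈ S := by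
    refine ⟨fun ω => X ω + 1, hX.add_const zero_le_one, by simp [hb1], ?_, ?_⟩
    · rw [hb1, ENNReal.toReal_ofReal (by positivity)]
      linarith
    · rw [hb1, ENNReal.toReal_ofReal (by positivity), werm_add_const ha₀ hm hX]
      congr 1 <;> ring
  have hpos : 0 < sSup S := (one_div_pos.mpr hR).trans_le (le_csSup hbdd hmem)
  refine ⟨sSup S, hpos, fun Y hY => ?_⟩
  by_cases hYt : budget P ρ Y = ⊤
  · rw [robj_of_eq_top hpos hYt]
    exact le_top
  rw [robj_of_ne_top _ (hb.trans_ne ENNReal.ofReal_ne_top), robj_of_ne_top _ hYt, hb,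
    ENNReal.toReal_ofReal hx.le, EReal.coe_le_coe_iff]
  rcases lt_trichotomy (budget P ρ Y).toReal x with h | h | h
  · have h1 : sSup S ≤ _ := csSup_le ⟨_, hmem⟩ (hup Y hY hYt h)
    rw [le_div_iff₀ (by linarith)] at h1
    linarith
  · have h1 := hopt Y ⟨hY, (ENNReal.le_ofReal_iff_toReal_le hYt hx.le).mpr h.le⟩
    rw [h]
    linarith
  · have h1 := le_csSup hbdd ⟨Y, hY, hYt, h, rfl⟩
    rw [div_le_iff₀ (by linarith)] at h1
    linarith

/-- Lagrangian characterization of the risk minimizer: `X*` solves the risk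
minimization problem over `𝒳(x)` iff there is `λ* > 0` such that `X*` minimizes
`h(X) + λ* E[ρX]` over `L⁰₊` and `E[ρX*] = x`; in that case `-λ*` is a subgradient of `γ₁`
at `x`. -/
theorem risk_minimization_lagrangian (P : Measure Ω) [IsProbabilityMeasure P]
    (a₀ a₁ : ℝ) (ha₀ : 0 < a₀) (ha₀₁ : a₀ < a₁)
    (m : Measure ℝ) [IsProbabilityMeasure m] (hm : m (Set.Icc a₀ a₁) = 1)
    (ρ : Ω → ℝ) (hmρ : Measurable ρ) (hρ0 : ∀ᵐ ω ∂P, 0 < ρ ω) (hρint : Integrable ρ P)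
    (x : ℝ) (hx : 0 < x) (X : Ω → ℝ) (hX : Lpos P X) :
    ((feasible P ρ x X ∧ werm P m a₀ a₁ X = gamma1 P m a₀ a₁ ρ x) ↔
      ∃ lam : ℝ, 0 < lam ∧
        (∀ Y, Lpos P Y → robj P m a₀ a₁ ρ lam X ≤ robj P m a₀ a₁ ρ lam Y) ∧
        budget P ρ X = ENNReal.ofReal x) ∧
    (∀ lam : ℝ, 0 < lam →
      (∀ Y, Lpos P Y → robj P m a₀ a₁ ρ lam X ≤ robj P m a₀ a₁ ρ lam Y) →
      budget P ρ X = ENNReal.ofReal x →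
      ∀ y : ℝ, 0 < y →
        gamma1 P m a₀ a₁ ρ x - lam * (y - x) ≤ gamma1 P m a₀ a₁ ρ y) := by
  refine ⟨⟨?_, ?_⟩, ?_⟩
  · rintro ⟨hf, hval⟩
    have hopt : ∀ Y, feasible P ρ x Y → werm P m a₀ a₁ X ≤ werm P m a₀ a₁ Y := fun Y hY =>
      hval.trans_le (csInf_le (werm_bddBelow ha₀ hm hmρ hρ0 hx) ⟨Y, hY, rfl⟩)
    have hb := budget_eq_of_minimizer ha₀ hm hmρ hρ0 hρint hf hopt
    obtain ⟨lam, hlam, hmin⟩ := exists_multiplier ha₀ hm hmρ hρ0 hρint hx hX hb hopt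
    exact ⟨lam, hlam, hmin, hb⟩
  · rintro ⟨lam, hlam, hmin, hb⟩
    exact ⟨⟨hX, hb.le⟩, (gamma1_eq_of_lagrangian hx hlam hX hmin hb).symm⟩
  · intro lam hlam hmin hb y hy
    rw [gamma1_eq_of_lagrangian hx hlam hX hmin hb]
    -- the zero payoff is feasible, so the infimum is over a nonempty set
    refine le_csInf ⟨_, fun _ => 0, ⟨⟨measurable_const, by simp⟩, by simp [budget]⟩, rfl⟩ ?_
    rintro _ ⟨Y, hY, rfl⟩
    exact lagrangian_le hx hlam hmin hb hy hY
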